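/- Let L ≥ 2 and θ ∈ ℝ. The self-dual Hamiltonian H_SD(θ) = H_BLBQ(θ) + U_KT H_BLBQ(θ) U_KT commutes with the projection P onto the hole-free subspace and with the total hole number N_h = Σ_{j=1}^{L} h_j; in particular the hole-free subspace H_{1/2} is an invariant subspace of H_SD(θ). -/

import Mathlib

noncomputable section
open Complex Matrix

/-- The Hilbert space operators of the `L`-site spin-1 chain: matrices on `(ℂ³)^{⊗L}`,
with the tensor factors indexed by sites and the single-site ordered basis `(|+⟩,|0⟩,|−⟩)`. -/
abbrev Op (L : ℕ) : Type := Matrix (Fin L → Fin 3) (Fin L → Fin 3) ℂ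

/-- The spin-1 matrix `Sˣ`. -/
def Sx : Matrix (Fin 3) (Fin 3) ℂ :=
  ((Real.sqrt 2 : ℝ) : ℂ)⁻¹ • !![0, 1, 0; 1, 0, 1; 0, 1, 0]

/-- The spin-1 matrix `Sʸ`. -/
def Sy : Matrix (Fin 3) (Fin 3) ℂ :=
  ((Real.sqrt 2 : ℝ) : ℂ)⁻¹ • !![0, -I, 0; I, 0, -I; 0, I, 0]

/-- The spin-1 matrix `Sᶻ = diag(1,0,−1)`. -/
def Sz : Matrix (Fin 3) (Fin 3) ℂ := !![1, 0, 0; 0, 0, 0; 0, 0, -1]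

/-- `site A j` is the one-site operator `A` acting on site `j` and identity elsewhere. -/
def site {L : ℕ} (A : Matrix (Fin 3) (Fin 3) ℂ) (j : Fin L) : Op L :=
  Matrix.of fun f g => ∏ k : Fin L, if k = j then A (f k) (g k) else (if f k = g k then 1 else 0)

/-- One factor `exp(iπ Sᶻ_u Sˣ_v)` of the Kennedy–Tasaki transformation. -/
def ktFactor {L : ℕ} (u v : Fin L) : Op L :=
  NormedSpace.exp (((Real.pi : ℂ) * I) • (site Sz u * site Sx v))

/-- The Kennedy–Tasaki transformation `U_KT = ∏_{1 ≤ u < v ≤ L} exp(iπ Sᶻ_u Sˣ_v)`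
(the factors pairwise commute, so the ordering is immaterial). -/
def UKT (L : ℕ) : Op L :=
  ((List.finRange L).map fun u =>
    ((List.finRange L).map fun v => if u < v then ktFactor u v else 1).prod).prod

/-- The p-wave basis vector `|↑⟩ = (|+⟩ − |−⟩)/√2`. -/
def up : Fin 3 → ℂ := ![((Real.sqrt 2 : ℝ) : ℂ)⁻¹, 0, -((Real.sqrt 2 : ℝ) : ℂ)⁻¹]

/-- The p-wave basis vector `|↓⟩ = |0⟩`. -/
def down : Fin 3 → ℂ := ![0, 1, 0]

/-- The p-wave basis vector `|h⟩ = (|+⟩ + |−⟩)/√2`. -/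
def hole : Fin 3 → ℂ := ![((Real.sqrt 2 : ℝ) : ℂ)⁻¹, 0, ((Real.sqrt 2 : ℝ) : ℂ)⁻¹]

/-- The rank-one operator `|a⟩⟨b|`. -/
def ketbra (a b : Fin 3 → ℂ) : Matrix (Fin 3) (Fin 3) ℂ := Matrix.vecMulVec a (star b)

/-- `σˣ = |↑⟩⟨↓| + |↓⟩⟨↑|` (annihilating `|h⟩`). -/
def sigx : Matrix (Fin 3) (Fin 3) ℂ := ketbra up down + ketbra down up

/-- `σʸ = −i|↑⟩⟨↓| + i|↓⟩⟨↑|` (annihilating `|h⟩`). -/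
def sigy : Matrix (Fin 3) (Fin 3) ℂ := (-I) • ketbra up down + I • ketbra down up

/-- `σᶻ = |↑⟩⟨↑| − |↓⟩⟨↓|` (annihilating `|h⟩`). -/
def sigz : Matrix (Fin 3) (Fin 3) ℂ := ketbra up up - ketbra down down

/-- `n = |↑⟩⟨↑| + |↓⟩⟨↓|` (annihilating `|h⟩`). -/
def nMat : Matrix (Fin 3) (Fin 3) ℂ := ketbra up up + ketbra down down

/-- `h = |h⟩⟨h|`. -/
def hMat : Matrix (Fin 3) (Fin 3) ℂ := ketbra hole hole

/-- `P = ⊗_{j=1}^L n_j`, the orthogonal projection onto the hole-free subspace. -/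
def Pproj (L : ℕ) : Op L := Matrix.of fun f g => ∏ k : Fin L, nMat (f k) (g k)

/-- The Heisenberg coupling `S_j · S_k`. -/
def heis {L : ℕ} (j k : Fin L) : Op L :=
  site Sx j * site Sx k + site Sy j * site Sy k + site Sz j * site Sz k

/-- The bilinear-biquadratic Hamiltonian
`H_BLBQ(θ) = Σ_{j=1}^{L−1} [cosθ (S_j·S_{j+1}) + sinθ (S_j·S_{j+1})²]`. -/
def HBLBQ (L : ℕ) (θ : ℝ) : Op L :=
  ∑ j : Fin L, if h : (j : ℕ) + 1 < L then
    ((Real.cos θ : ℝ) : ℂ) • heis j ⟨(j : ℕ) + 1, h⟩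
      + ((Real.sin θ : ℝ) : ℂ) • (heis j ⟨(j : ℕ) + 1, h⟩) ^ 2
  else 0

/-- The self-dual Hamiltonian `H_SD(θ) = H_BLBQ(θ) + U_KT H_BLBQ(θ) U_KT`. -/
def HSD (L : ℕ) (θ : ℝ) : Op L := HBLBQ L θ + UKT L * HBLBQ L θ * UKT L

/-- The spin-1/2 XXZ Hamiltonian written in the p-wave basis:
`H_XXZ(θ) = (cosθ−sinθ) Σ_j (−σˣ_jσˣ_{j+1} + σʸ_jσʸ_{j+1}) + sinθ Σ_j σᶻ_jσᶻ_{j+1}`. -/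
def HXXZ (L : ℕ) (θ : ℝ) : Op L :=
  ((Real.cos θ - Real.sin θ : ℝ) : ℂ) •
    (∑ j : Fin L, if h : (j : ℕ) + 1 < L then
      -(site sigx j * site sigx ⟨(j : ℕ) + 1, h⟩) + site sigy j * site sigy ⟨(j : ℕ) + 1, h⟩
    else 0)
  + ((Real.sin θ : ℝ) : ℂ) •
    (∑ j : Fin L, if h : (j : ℕ) + 1 < L then
      site sigz j * site sigz ⟨(j : ℕ) + 1, h⟩
    else 0)

/-- The global product `∏_{j=1}^L exp(c • A_j)` of commuting single-site exponentials. -/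
def globalProd (L : ℕ) (A : Matrix (Fin 3) (Fin 3) ℂ) (c : ℂ) : Op L :=
  ((List.finRange L).map fun j => NormedSpace.exp (c • site A j)).prod

/-- The symmetry flux `F^y_j = exp(−iπ Σ_{k<j} Sʸ_k) · Sʸ_j`. -/
def fluxY (L : ℕ) (j : Fin L) : Op L :=
  NormedSpace.exp ((-((Real.pi : ℂ) * I)) •
    ∑ k : Fin L, if (k : ℕ) < (j : ℕ) then site Sy k else 0) * site Sy j

/-!
`H_SD` preserves the hole occupation `h_j` of every single site. In the p-wave basis `Sˣ` and `Sᶻ`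
exchange `|h⟩` with `|↓⟩` and `|↑⟩`, while `Sʸ` annihilates `|h⟩`; so the terms of `S_j · S_k` and
of its square that change hole occupations are `a = SˣSˣ + SᶻSᶻ` and `ab + ba` with `b = SʸSʸ`.

Conjugating a bond term by `U_KT` amounts to conjugating it by the single gate
`exp(iπ Sᶻ_j Sˣ_{j+1})`: the other gates touching the bond combine into exponentials of the total
spins `Sˣ_j + Sˣ_{j+1}` and `Sᶻ_j + Sᶻ_{j+1}`, which the bond term conserves. This gate is the
reflection `1 - 2 (Sᶻ_j)² (Sˣ_{j+1})²`. Both `a` and `ab + ba` are off-diagonal for it, hence change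
sign and cancel in the self-dual sum; all remaining terms preserve each `h_j`.
-/

section OffDiagonal

variable {R : Type*} [Ring R]

/-- `m` is off-diagonal with respect to the idempotent `p`: in the block decomposition given by `p`
and `1 - p`, both diagonal blocks `p * m * p` and `(1 - p) * m * (1 - p)` vanish. -/
def IsOffDiag (p m : R) : Prop := p * m + m * p = m

namespace IsOffDiag

variable {p m m' : R}

lemma add (hm : IsOffDiag p m) (hm' : IsOffDiag p m') : IsOffDiag p (m + m') := by
  rw [IsOffDiag] at *
  linear_combination (norm := noncomm_ring) hm + hm'

lemma conj_one_sub_two_mul (hm : IsOffDiag p m) (hp : IsIdempotentElem p) :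
    (1 - 2 * p) * m * (1 - 2 * p) = -m := by
  have hpmp : p * m * p = 0 := by
    have h := congrArg (p * ·) hm
    simp only [mul_add, ← mul_assoc, hp.eq] at h
    exact add_eq_left.mp h
  calc (1 - 2 * p) * m * (1 - 2 * p)
      = m - 2 * (p * m + m * p) + 4 * (p * m * p) := by noncomm_ring
    _ = -m := by rw [hm, hpmp]; noncomm_ring

lemma commute_sq (hm : IsOffDiag p m) : Commute p (m ^ 2) := by
  rw [commute_iff_eq, IsOffDiag] at *
  linear_combination (norm := noncomm_ring) hm * m - m * hm

/-- The off-diagonal part of `m + d` changes sign under the conjugation, so it cancels. -/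
lemma commute_add_conj {q d : R} (hm : IsOffDiag p m) (hp : IsIdempotentElem p)
    (hqp : Commute q p) (hqd : Commute q d) :
    Commute q (m + d + (1 - 2 * p) * (m + d) * (1 - 2 * p)) := by
  have hcancel : m + d + (1 - 2 * p) * (m + d) * (1 - 2 * p) =
      d + (1 - 2 * p) * d * (1 - 2 * p) := by
    rw [mul_add, add_mul, hm.conj_one_sub_two_mul hp]
    abel
  have hqr : Commute q (1 - 2 * p) :=
    (Commute.one_right q).sub_right ((Commute.ofNat_right q 2).mul_right hqp)
  rw [hcancel]
  exact hqd.add_right ((hqr.mul_right hqd).mul_right hqr)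

end IsOffDiag

end OffDiagonal

section ProductSplitting

variable {C ι : Type*} [CommMonoid C] [Fintype ι] {j k : ι}

lemma prod_eq_mul_mul_prod_erase_erase [DecidableEq ι] (hjk : j ≠ k) (g : ι → C) :
    ∏ v, g v = g j * g k * ∏ v ∈ (Finset.univ.erase j).erase k, g v := by
  have hk : k ∈ Finset.univ.erase j := Finset.mem_erase.mpr ⟨hjk.symm, Finset.mem_univ k⟩
  rw [← Finset.mul_prod_erase _ g (Finset.mem_univ j), ← Finset.mul_prod_erase _ g hk, mul_assoc]

lemma exists_mem_prod_prod_eq_mul (S : Submonoid C) (F : ι → ι → C) (hjk : j ≠ k)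
    (hjj : F j j = 1) (hkk : F k k = 1) (hkj : F k j = 1)
    (hoff : ∀ u v, u ≠ j → u ≠ k → v ≠ j → v ≠ k → F u v ∈ S)
    (hcol : ∀ u, u ≠ j → u ≠ k → F u j * F u k ∈ S)
    (hrow : ∀ v, v ≠ j → v ≠ k → F j v * F k v ∈ S) :
    ∃ r ∈ S, ∏ u, ∏ v, F u v = F j k * r := by
  classical
  refine ⟨(∏ v ∈ (Finset.univ.erase j).erase k, F j v * F k v) *
    ∏ u ∈ (Finset.univ.erase j).erase k, ∏ v, F u v, S.mul_mem ?_ ?_, ?_⟩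
  · refine S.prod_mem fun v hv => ?_
    simp only [Finset.mem_erase, Finset.mem_univ, and_true] at hv
    exact hrow v hv.2 hv.1
  · refine S.prod_mem fun u hu => ?_
    simp only [Finset.mem_erase, Finset.mem_univ, and_true] at hu
    rw [prod_eq_mul_mul_prod_erase_erase hjk]
    refine S.mul_mem (hcol u hu.2 hu.1) (S.prod_mem fun v hv => ?_)
    simp only [Finset.mem_erase, Finset.mem_univ, and_true] at hv
    exact hoff u v hu.2 hu.1 hv.2 hv.1
  · rw [prod_eq_mul_mul_prod_erase_erase hjk fun u => ∏ v, F u v, ← Finset.prod_mul_distrib,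
      prod_eq_mul_mul_prod_erase_erase hjk fun v => F j v * F k v, hjj, hkk, hkj, one_mul, mul_one,
      one_mul, mul_assoc]

end ProductSplitting

section Exponential

lemma exp_smul_of_isIdempotentElem {A : Type*} [Ring A] [Algebra ℂ A] [TopologicalSpace A]
    [IsTopologicalRing A] [ContinuousSMul ℂ A] [T2Space A] {p : A}
    (hp : IsIdempotentElem p) (c : ℂ) :
    NormedSpace.exp (c • p) = 1 + (Complex.exp c - 1) • p := by
  have hasSum_scalar (z : ℂ) (a : A) :
      HasSum (fun n : ℕ => ((n.factorial : ℂ)⁻¹ * z ^ n) • a) (Complex.exp z • a) := by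
    rw [Complex.exp_eq_exp_ℂ]
    exact (NormedSpace.exp_series_hasSum_exp' (𝕂 := ℂ) z).smul_const a
  have hpow (n : ℕ) : (c • p) ^ n = (0 : ℂ) ^ n • (1 - p) + c ^ n • p := by
    rcases n.eq_zero_or_pos with rfl | hn
    · simp
    · rw [smul_pow, hp.pow_eq hn.ne', zero_pow hn.ne', zero_smul, zero_add]
  have hsum := (hasSum_scalar 0 (1 - p)).add (hasSum_scalar c p)
  simp only [NormedSpace.exp_eq_tsum ℂ, hpow, smul_add, smul_smul]
  rw [hsum.tsum_eq, Complex.exp_zero]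
  module

/-- With `q = (X² - X) / 2` idempotent, `X = X² - 2q` and `exp (2πi q) = 1`. -/
lemma exp_pi_mul_I_smul_of_pow_three_eq {m : Type*} [Fintype m] [DecidableEq m]
    {X : Matrix m m ℂ} (hX : X ^ 3 = X) :
    NormedSpace.exp (((Real.pi : ℂ) * I) • X) = 1 - (2 : ℂ) • X ^ 2 := by
  have hX4 : X ^ 4 = X ^ 2 := by rw [pow_succ, hX, sq]
  have hsq : IsIdempotentElem (X ^ 2) := by rw [IsIdempotentElem, ← pow_add, hX4]
  have hq : IsIdempotentElem ((1 / 2 : ℂ) • (X ^ 2 - X)) := by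
    have hmul : (X ^ 2 - X) * (X ^ 2 - X) = (2 : ℂ) • (X ^ 2 - X) := by
      calc (X ^ 2 - X) * (X ^ 2 - X) = X ^ 4 - 2 * X ^ 3 + X ^ 2 := by noncomm_ring
        _ = (2 : ℂ) • (X ^ 2 - X) := by rw [hX4, hX, two_smul]; noncomm_ring
    rw [IsIdempotentElem, smul_mul_smul_comm, hmul, smul_smul]
    norm_num
  have hcomm : Commute (((Real.pi : ℂ) * I) • X ^ 2)
      ((-(2 * Real.pi * I)) • (1 / 2 : ℂ) • (X ^ 2 - X)) :=
    have hsub : Commute (X ^ 2) (X ^ 2 - X) :=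
      (Commute.refl (X ^ 2)).sub_right (Commute.pow_self X 2)
    ((hsub.smul_right _).smul_right _).smul_left _
  have hdecomp : ((Real.pi : ℂ) * I) • X =
      ((Real.pi : ℂ) * I) • X ^ 2 + (-(2 * Real.pi * I)) • (1 / 2 : ℂ) • (X ^ 2 - X) := by
    module
  rw [hdecomp, Matrix.exp_add_of_commute _ _ hcomm, exp_smul_of_isIdempotentElem hsq,
    exp_smul_of_isIdempotentElem hq, Complex.exp_pi_mul_I, Complex.exp_neg,
    Complex.exp_two_pi_mul_I]
  simp only [inv_one, sub_self, zero_smul, add_zero, mul_one]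
  module

end Exponential

section TensorProduct

variable {ι n R : Type*} [Fintype ι] [DecidableEq ι] [Fintype n] [DecidableEq n] [CommSemiring R]

/-- The tensor product `⊗ᵢ A i` of a family of square matrices, as a multiplicative map into the
matrices indexed by configurations `ι → n`. -/
def tensorProd : (ι → Matrix n n R) →* Matrix (ι → n) (ι → n) R where
  toFun A := Matrix.of fun f g => ∏ i, A i (f i) (g i)
  map_one' := by
    ext f g
    simp [Matrix.one_apply, Fintype.prod_ite_zero, funext_iff]
  map_mul' A B := by
    ext f g
    simp [Matrix.mul_apply, Fintype.prod_sum, Finset.prod_mul_distrib]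

lemma tensorProd_apply (A : ι → Matrix n n R) (f g : ι → n) :
    tensorProd A f g = ∏ i, A i (f i) (g i) := rfl

end TensorProduct

section Site

variable {L : ℕ} {j k : Fin L}

lemma site_eq_tensorProd (A : Matrix (Fin 3) (Fin 3) ℂ) (j : Fin L) :
    site A j = tensorProd (Pi.mulSingle j A) := by
  ext f g
  rw [site, Matrix.of_apply, tensorProd_apply]
  refine Finset.prod_congr rfl fun k _ => ?_
  by_cases hk : k = j
  · subst hk; simp
  · simp [hk, Matrix.one_apply]

lemma site_apply (A : Matrix (Fin 3) (Fin 3) ℂ) (j : Fin L) (f g : Fin L → Fin 3) :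
    site A j f g = A (f j) (g j) * ∏ k ∈ Finset.univ.erase j, if f k = g k then 1 else 0 := by
  rw [site, Matrix.of_apply, ← Finset.mul_prod_erase _ _ (Finset.mem_univ j), if_pos rfl]
  congr 1
  exact Finset.prod_congr rfl fun k hk => if_neg (Finset.ne_of_mem_erase hk)

/-- `A ↦ A_j` as an algebra homomorphism. -/
def siteHom (j : Fin L) : Matrix (Fin 3) (Fin 3) ℂ →ₐ[ℂ] Op L :=
  AlgHom.ofLinearMap
    { toFun := fun A => site A j
      map_add' := fun A B => by ext f g; simp only [site_apply, Matrix.add_apply, add_mul]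
      map_smul' := fun c A => by
        ext f g
        simp only [site_apply, Matrix.smul_apply, smul_eq_mul, mul_assoc, RingHom.id_apply] }
    (by simp [site_eq_tensorProd])
    (fun A B => by simp [site_eq_tensorProd, Pi.mulSingle_mul])

lemma siteHom_apply (A : Matrix (Fin 3) (Fin 3) ℂ) (j : Fin L) : siteHom j A = site A j := rfl

lemma commute_site_of_ne (hjk : j ≠ k) (A B : Matrix (Fin 3) (Fin 3) ℂ) :
    Commute (site A j) (site B k) := by
  rw [site_eq_tensorProd, site_eq_tensorProd]
  exact (Pi.mulSingle_commute hjk A B).map tensorProd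

lemma commute_site {A B : Matrix (Fin 3) (Fin 3) ℂ} (h : Commute A B) (j k : Fin L) :
    Commute (site A j) (site B k) := by
  obtain rfl | hjk := eq_or_ne j k
  · exact h.map (siteHom j)
  · exact commute_site_of_ne hjk A B

lemma site_mul_site_mul_site_mul_site (hjk : j ≠ k) (A B C D : Matrix (Fin 3) (Fin 3) ℂ) :
    site A j * site B k * (site C j * site D k) = site (A * C) j * site (B * D) k := by
  simp only [← siteHom_apply, map_mul]
  exact (commute_site_of_ne hjk.symm B C).mul_mul_mul_comm (siteHom j A) (siteHom k D)

lemma lie_site_add_site (hjk : j ≠ k) (A B C : Matrix (Fin 3) (Fin 3) ℂ) :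
    ⁅site A j + site A k, site B j * site C k⁆ =
      site ⁅A, B⁆ j * site C k + site B j * site ⁅A, C⁆ k := by
  have hAC : site A j * site C k = site C k * site A j := commute_site_of_ne hjk A C
  have hAB : site A k * site B j = site B j * site A k := commute_site_of_ne hjk.symm A B
  simp only [Ring.lie_def, ← siteHom_apply, map_sub, map_mul] at hAC hAB ⊢
  linear_combination (norm := noncomm_ring) siteHom j B * hAC + hAB * siteHom k C

lemma commute_tensorProd {X : Op L} {A : Fin L → Matrix (Fin 3) (Fin 3) ℂ}
    (h : ∀ j, Commute X (site (A j) j)) : Commute X (tensorProd A) := by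
  have hmem : A ∈ (Submonoid.centralizer {X}).comap tensorProd := by
    rw [← Finset.noncommProd_mulSingle A]
    refine Submonoid.noncommProd_mem _ _ _ _ fun j _ => ?_
    rw [Submonoid.mem_comap, ← site_eq_tensorProd, Submonoid.mem_centralizer_iff]
    exact fun _ hX => Set.mem_singleton_iff.mp hX ▸ h j
  exact Submonoid.mem_centralizer_iff.mp hmem X rfl

end Site

section PWave

lemma inv_sqrt_two_mul_self :
    ((Real.sqrt 2 : ℝ) : ℂ)⁻¹ * ((Real.sqrt 2 : ℝ) : ℂ)⁻¹ = 1 / 2 := by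
  rw [← mul_inv, ← Complex.ofReal_mul, Real.mul_self_sqrt zero_le_two]
  norm_num

lemma ketbra_apply (a b : Fin 3 → ℂ) (s t : Fin 3) : ketbra a b s t = a s * star (b t) := rfl

lemma pwave_orthonormal :
    (star up ⬝ᵥ up = 1 ∧ star up ⬝ᵥ down = 0 ∧ star up ⬝ᵥ hole = 0) ∧
    (star down ⬝ᵥ up = 0 ∧ star down ⬝ᵥ down = 1 ∧ star down ⬝ᵥ hole = 0) ∧
    (star hole ⬝ᵥ up = 0 ∧ star hole ⬝ᵥ down = 0 ∧ star hole ⬝ᵥ hole = 1) := by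
  have h := inv_sqrt_two_mul_self
  have half_add_half : (2⁻¹ : ℂ) + 2⁻¹ = 1 := by norm_num
  simp [up, down, hole, dotProduct, Fin.sum_univ_three, h, half_add_half]

lemma ketbra_mul_ketbra (a b c d : Fin 3 → ℂ) :
    ketbra a b * ketbra c d = (star b ⬝ᵥ c) • ketbra a d := by
  rw [ketbra, ketbra, vecMulVec_mul_vecMulVec, vecMulVec_smul, ketbra]

lemma pwave_complete : ketbra up up + ketbra down down + ketbra hole hole = 1 := by
  have h := inv_sqrt_two_mul_self
  ext a b
  fin_cases a <;> fin_cases b <;>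
    norm_num [ketbra_apply, up, down, hole, h]

lemma nMat_eq_one_sub_hMat : nMat = 1 - hMat := by
  rw [← pwave_complete, hMat, nMat, add_sub_cancel_right]

lemma Sx_eq_ketbra : Sx = ketbra hole down + ketbra down hole := by
  ext a b
  fin_cases a <;> fin_cases b <;> simp [Sx, ketbra_apply, down, hole]

lemma Sy_eq_ketbra : Sy = I • ketbra down up - I • ketbra up down := by
  ext a b
  fin_cases a <;> fin_cases b <;> simp [Sy, ketbra_apply, up, down, mul_comm]

lemma Sz_eq_ketbra : Sz = ketbra hole up + ketbra up hole := by
  have h := inv_sqrt_two_mul_self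
  ext a b
  fin_cases a <;> fin_cases b <;>
    norm_num [Sz, ketbra_apply, up, hole, h]

end PWave

section SpinAlgebra

lemma Sx_mul_Sy : Sx * Sy = I • ketbra hole up := by
  simp [Sx_eq_ketbra, Sy_eq_ketbra, mul_sub, add_mul, ketbra_mul_ketbra, pwave_orthonormal]

lemma Sy_mul_Sx : Sy * Sx = -(I • ketbra up hole) := by
  simp [Sx_eq_ketbra, Sy_eq_ketbra, mul_add, sub_mul, ketbra_mul_ketbra, pwave_orthonormal]

lemma Sy_mul_Sz : Sy * Sz = I • ketbra down hole := by
  simp [Sz_eq_ketbra, Sy_eq_ketbra, mul_add, sub_mul, ketbra_mul_ketbra, pwave_orthonormal]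

lemma Sz_mul_Sy : Sz * Sy = -(I • ketbra hole down) := by
  simp [Sz_eq_ketbra, Sy_eq_ketbra, mul_sub, add_mul, ketbra_mul_ketbra, pwave_orthonormal]

lemma lie_Sx_Sy : ⁅Sx, Sy⁆ = I • Sz := by
  rw [Ring.lie_def, Sx_mul_Sy, Sy_mul_Sx, Sz_eq_ketbra]
  module

lemma lie_Sz_Sy : ⁅Sz, Sy⁆ = -(I • Sx) := by
  rw [Ring.lie_def, Sz_mul_Sy, Sy_mul_Sz, Sx_eq_ketbra]
  module

lemma lie_Sz_Sx : ⁅Sz, Sx⁆ = I • Sy := by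
  have hzx : Sz * Sx = ketbra up down := by
    simp [Sz_eq_ketbra, Sx_eq_ketbra, mul_add, add_mul, ketbra_mul_ketbra, pwave_orthonormal]
  have hxz : Sx * Sz = ketbra down up := by
    simp [Sz_eq_ketbra, Sx_eq_ketbra, mul_add, add_mul, ketbra_mul_ketbra, pwave_orthonormal]
  rw [Ring.lie_def, hzx, hxz, Sy_eq_ketbra, smul_sub, smul_smul, smul_smul, I_mul_I]
  module

lemma Sx_sq_eq_ketbra : Sx ^ 2 = ketbra down down + ketbra hole hole := by
  simp [sq, Sx_eq_ketbra, mul_add, add_mul, ketbra_mul_ketbra, pwave_orthonormal]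

lemma Sz_sq_eq_ketbra : Sz ^ 2 = ketbra up up + ketbra hole hole := by
  simp [sq, Sz_eq_ketbra, mul_add, add_mul, ketbra_mul_ketbra, pwave_orthonormal]

lemma Sx_pow_three : Sx ^ 3 = Sx := by
  rw [pow_succ, Sx_sq_eq_ketbra, Sx_eq_ketbra]
  simp [mul_add, add_mul, ketbra_mul_ketbra, pwave_orthonormal]

lemma Sz_pow_three : Sz ^ 3 = Sz := by
  rw [pow_succ, Sz_sq_eq_ketbra, Sz_eq_ketbra]
  simp [mul_add, add_mul, ketbra_mul_ketbra, pwave_orthonormal]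

lemma commute_Sz_sq_Sx_sq : Commute (Sz ^ 2) (Sx ^ 2) := by
  simp [Commute, SemiconjBy, Sx_sq_eq_ketbra, Sz_sq_eq_ketbra, mul_add, add_mul,
    ketbra_mul_ketbra, pwave_orthonormal]

lemma commute_hMat_Sx_sq : Commute hMat (Sx ^ 2) := by
  simp [Commute, SemiconjBy, hMat, Sx_sq_eq_ketbra, mul_add, add_mul,
    ketbra_mul_ketbra, pwave_orthonormal]

lemma commute_hMat_Sz_sq : Commute hMat (Sz ^ 2) := by
  simp [Commute, SemiconjBy, hMat, Sz_sq_eq_ketbra, mul_add, add_mul,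
    ketbra_mul_ketbra, pwave_orthonormal]

lemma commute_hMat_Sy : Commute hMat Sy := by
  simp [Commute, SemiconjBy, hMat, Sy_eq_ketbra, mul_sub, sub_mul,
    ketbra_mul_ketbra, pwave_orthonormal]

lemma isOffDiag_hMat_Sx : IsOffDiag hMat Sx := by
  simp [IsOffDiag, hMat, Sx_eq_ketbra, mul_add, add_mul, ketbra_mul_ketbra, pwave_orthonormal]

lemma isOffDiag_hMat_Sz : IsOffDiag hMat Sz := by
  simp [IsOffDiag, hMat, Sz_eq_ketbra, mul_add, add_mul, ketbra_mul_ketbra, pwave_orthonormal]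

lemma isOffDiag_Sz_sq_Sx : IsOffDiag (Sz ^ 2) Sx := by
  simp [IsOffDiag, Sz_sq_eq_ketbra, Sx_eq_ketbra, mul_add, add_mul, ketbra_mul_ketbra,
    pwave_orthonormal]

lemma isOffDiag_Sx_sq_Sz : IsOffDiag (Sx ^ 2) Sz := by
  simp [IsOffDiag, Sx_sq_eq_ketbra, Sz_eq_ketbra, mul_add, add_mul, ketbra_mul_ketbra,
    pwave_orthonormal]

end SpinAlgebra

section TwoSite

variable {L : ℕ} {j k : Fin L} {p q m n : Matrix (Fin 3) (Fin 3) ℂ}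

lemma IsOffDiag.site_mul_site_left (hm : IsOffDiag p m) (hjk : j ≠ k) (hqn : q * n = n)
    (hnq : n * q = n) : IsOffDiag (site p j * site q k) (site m j * site n k) := by
  rw [IsOffDiag, site_mul_site_mul_site_mul_site hjk, site_mul_site_mul_site_mul_site hjk, hqn, hnq,
    ← add_mul]
  simp only [← siteHom_apply]
  rw [← map_add, hm]

lemma IsOffDiag.site_mul_site_right (hn : IsOffDiag q n) (hjk : j ≠ k) (hpm : p * m = m)
    (hmp : m * p = m) : IsOffDiag (site p j * site q k) (site m j * site n k) := by
  rw [(commute_site_of_ne hjk p q).eq, (commute_site_of_ne hjk m n).eq]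
  exact hn.site_mul_site_left hjk.symm hpm hmp

/-- The projection onto the states with `Sᶻ_u Sˣ_v = ±1`. -/
def ktProj (u v : Fin L) : Op L := site (Sz ^ 2) u * site (Sx ^ 2) v

lemma isIdempotentElem_ktProj (hjk : j ≠ k) : IsIdempotentElem (ktProj j k) := by
  rw [IsIdempotentElem, ktProj, site_mul_site_mul_site_mul_site hjk, ← pow_add, ← pow_add,
    pow_succ Sz 3, pow_succ Sx 3, Sz_pow_three, Sx_pow_three, sq, sq]

lemma ktFactor_eq_one_sub (hjk : j ≠ k) : ktFactor j k = 1 - 2 * ktProj j k := by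
  have hsq : (site Sz j * site Sx k) ^ 2 = ktProj j k := by
    rw [(commute_site_of_ne hjk Sz Sx).mul_pow, ktProj]
    simp only [← siteHom_apply, map_pow]
  have hcube : (site Sz j * site Sx k) ^ 3 = site Sz j * site Sx k := by
    rw [(commute_site_of_ne hjk Sz Sx).mul_pow]
    simp only [← siteHom_apply, ← map_pow, Sz_pow_three, Sx_pow_three]
  rw [ktFactor, exp_pi_mul_I_smul_of_pow_three_eq hcube, hsq, two_smul, two_mul]

lemma commute_site_hMat_ktProj (l u v : Fin L) : Commute (site hMat l) (ktProj u v) :=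
  (commute_site commute_hMat_Sz_sq l u).mul_right (commute_site commute_hMat_Sx_sq l v)

/-- The `Sˣ` and `Sᶻ` terms of `S_j · S_k`. In the p-wave basis these are the terms that change the
hole occupation, of both sites at once. -/
def heisXZ (j k : Fin L) : Op L := site Sx j * site Sx k + site Sz j * site Sz k

lemma heis_eq_heisXZ_add (j k : Fin L) : heis j k = heisXZ j k + site Sy j * site Sy k := by
  rw [heis, heisXZ]
  abel

lemma isOffDiag_ktProj_heisXZ (hjk : j ≠ k) : IsOffDiag (ktProj j k) (heisXZ j k) := by
  have hx : Sx * Sx ^ 2 = Sx := by rw [← pow_succ', Sx_pow_three]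
  have hz : Sz * Sz ^ 2 = Sz := by rw [← pow_succ', Sz_pow_three]
  exact (isOffDiag_Sz_sq_Sx.site_mul_site_left hjk Sx_pow_three hx).add
    (isOffDiag_Sx_sq_Sz.site_mul_site_right hjk Sz_pow_three hz)

lemma isOffDiag_site_hMat_heisXZ (hjk : j ≠ k) :
    IsOffDiag (site hMat j) (heisXZ j k) := by
  have hone : site hMat j = site hMat j * site 1 k := by rw [← siteHom_apply 1, map_one, mul_one]
  rw [hone]
  exact (isOffDiag_hMat_Sx.site_mul_site_left hjk (one_mul _) (mul_one _)).add
    (isOffDiag_hMat_Sz.site_mul_site_left hjk (one_mul _) (mul_one _))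

lemma heisXZ_comm (hjk : j ≠ k) : heisXZ j k = heisXZ k j := by
  rw [heisXZ, (commute_site_of_ne hjk Sx Sx).eq, (commute_site_of_ne hjk Sz Sz).eq, heisXZ]

lemma isOffDiag_ktProj_anticommutator_heisXZ (hjk : j ≠ k) :
    IsOffDiag (ktProj j k)
      (heisXZ j k * (site Sy j * site Sy k) + site Sy j * site Sy k * heisXZ j k) := by
  have hxy : IsOffDiag (ktProj j k) (site (Sx * Sy) j * site (Sx * Sy) k) := by
    refine IsOffDiag.site_mul_site_right ?_ hjk ?_ ?_ <;>
    simp [IsOffDiag, Sx_mul_Sy, Sz_sq_eq_ketbra, Sx_sq_eq_ketbra, mul_add, add_mul,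
      ketbra_mul_ketbra, pwave_orthonormal]
  have hyx : IsOffDiag (ktProj j k) (site (Sy * Sx) j * site (Sy * Sx) k) := by
    refine IsOffDiag.site_mul_site_right ?_ hjk ?_ ?_ <;>
    simp [IsOffDiag, Sy_mul_Sx, Sz_sq_eq_ketbra, Sx_sq_eq_ketbra, mul_add, add_mul,
      ketbra_mul_ketbra, pwave_orthonormal]
  have hyz : IsOffDiag (ktProj j k) (site (Sy * Sz) j * site (Sy * Sz) k) := by
    refine IsOffDiag.site_mul_site_left ?_ hjk ?_ ?_ <;>
    simp [IsOffDiag, Sy_mul_Sz, Sz_sq_eq_ketbra, Sx_sq_eq_ketbra, mul_add, add_mul,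
      ketbra_mul_ketbra, pwave_orthonormal]
  have hzy : IsOffDiag (ktProj j k) (site (Sz * Sy) j * site (Sz * Sy) k) := by
    refine IsOffDiag.site_mul_site_left ?_ hjk ?_ ?_ <;>
    simp [IsOffDiag, Sz_mul_Sy, Sz_sq_eq_ketbra, Sx_sq_eq_ketbra, mul_add, add_mul,
      ketbra_mul_ketbra, pwave_orthonormal]
  rw [heisXZ, add_mul, mul_add]
  simp only [site_mul_site_mul_site_mul_site hjk]
  exact (hxy.add hzy).add (hyx.add hyz)

lemma commute_site_hMat_heisXZ_sq (hjk : j ≠ k) (l : Fin L) :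
    Commute (site hMat l) (heisXZ j k ^ 2) := by
  obtain rfl | hlj := eq_or_ne l j
  · exact (isOffDiag_site_hMat_heisXZ hjk).commute_sq
  obtain rfl | hlk := eq_or_ne l k
  · rw [heisXZ_comm hjk]
    exact (isOffDiag_site_hMat_heisXZ hjk.symm).commute_sq
  exact (((commute_site_of_ne hlj _ _).mul_right (commute_site_of_ne hlk _ _)).add_right
    ((commute_site_of_ne hlj _ _).mul_right (commute_site_of_ne hlk _ _))).pow_right 2

lemma commute_site_hMat_Sy_mul_Sy (j k l : Fin L) :
    Commute (site hMat l) (site Sy j * site Sy k) :=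
  (commute_site commute_hMat_Sy l j).mul_right (commute_site commute_hMat_Sy l k)

lemma commute_site_hMat_heis_add_conj (hjk : j ≠ k) (l : Fin L) :
    Commute (site hMat l) (heis j k + ktFactor j k * heis j k * ktFactor j k) := by
  rw [heis_eq_heisXZ_add, ktFactor_eq_one_sub hjk]
  exact (isOffDiag_ktProj_heisXZ hjk).commute_add_conj (isIdempotentElem_ktProj hjk)
    (commute_site_hMat_ktProj l j k) (commute_site_hMat_Sy_mul_Sy j k l)

lemma commute_site_hMat_heis_sq_add_conj (hjk : j ≠ k) (l : Fin L) :
    Commute (site hMat l) (heis j k ^ 2 + ktFactor j k * heis j k ^ 2 * ktFactor j k) := by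
  have hsq : heis j k ^ 2 =
      (heisXZ j k * (site Sy j * site Sy k) + site Sy j * site Sy k * heisXZ j k) +
        (heisXZ j k ^ 2 + (site Sy j * site Sy k) ^ 2) := by
    rw [heis_eq_heisXZ_add]
    noncomm_ring
  rw [hsq, ktFactor_eq_one_sub hjk]
  exact (isOffDiag_ktProj_anticommutator_heisXZ hjk).commute_add_conj (isIdempotentElem_ktProj hjk)
    (commute_site_hMat_ktProj l j k)
    ((commute_site_hMat_heisXZ_sq hjk l).add_right
      ((commute_site_hMat_Sy_mul_Sy j k l).pow_right 2))

/-- The summand `cosθ (S_j·S_k) + sinθ (S_j·S_k)²` of `H_BLBQ(θ)`. -/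
def bond (θ : ℝ) (j k : Fin L) : Op L :=
  ((Real.cos θ : ℝ) : ℂ) • heis j k + ((Real.sin θ : ℝ) : ℂ) • heis j k ^ 2

lemma commute_site_hMat_bond_add_conj (hjk : j ≠ k) (θ : ℝ) (l : Fin L) :
    Commute (site hMat l) (bond θ j k + ktFactor j k * bond θ j k * ktFactor j k) := by
  have hbond : bond θ j k + ktFactor j k * bond θ j k * ktFactor j k =
      ((Real.cos θ : ℝ) : ℂ) • (heis j k + ktFactor j k * heis j k * ktFactor j k) +
        ((Real.sin θ : ℝ) : ℂ) •
          (heis j k ^ 2 + ktFactor j k * heis j k ^ 2 * ktFactor j k) := by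
    simp only [bond, mul_add, add_mul, mul_smul_comm, smul_mul_assoc, smul_add]
    abel
  rw [hbond]
  exact ((commute_site_hMat_heis_add_conj hjk l).smul_right _).add_right
    ((commute_site_hMat_heis_sq_add_conj hjk l).smul_right _)

end TwoSite

section KennedyTasaki

variable {L : ℕ} {j k : Fin L}

/-- The factor of `U_KT` at the ordered pair `(u, v)`, extended by `1` to the pairs with `v ≤ u`. -/
def ktGate (u v : Fin L) : Op L := if u < v then ktFactor u v else 1

lemma ktGate_of_lt {u v : Fin L} (h : u < v) : ktGate u v = ktFactor u v := if_pos h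

lemma ktGate_of_le {u v : Fin L} (h : v ≤ u) : ktGate u v = 1 := if_neg h.not_gt

lemma commute_ktGate {X : Op L} {u v : Fin L} (hz : Commute X (site (Sz ^ 2) u))
    (hx : Commute X (site (Sx ^ 2) v)) : Commute X (ktGate u v) := by
  obtain huv | hvu := lt_or_ge u v
  · rw [ktGate_of_lt huv, ktFactor_eq_one_sub huv.ne]
    exact (Commute.one_right X).sub_right ((Commute.ofNat_right X 2).mul_right (hz.mul_right hx))
  · rw [ktGate_of_le hvu]
    exact Commute.one_right X

lemma commute_ktGate_ktGate (u v u' v' : Fin L) : Commute (ktGate u v) (ktGate u' v') :=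
  commute_ktGate
    (commute_ktGate (commute_site (.refl _) u' u) (commute_site commute_Sz_sq_Sx_sq u' v)).symm
    (commute_ktGate (commute_site commute_Sz_sq_Sx_sq.symm v' u) (commute_site (.refl _) v' v)).symm

lemma ktGate_sq (u v : Fin L) : ktGate u v ^ 2 = 1 := by
  obtain huv | hvu := lt_or_ge u v
  · have hp : ktProj u v * ktProj u v = ktProj u v := isIdempotentElem_ktProj huv.ne
    rw [ktGate_of_lt huv, ktFactor_eq_one_sub huv.ne]
    linear_combination (norm := noncomm_ring) 4 * hp
  · rw [ktGate_of_le hvu, one_pow]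

lemma ktFactor_mul_ktFactor_eq_exp_left {u : Fin L} (huj : u ≠ j) (huk : u ≠ k) :
    ktFactor u j * ktFactor u k =
      NormedSpace.exp (((Real.pi : ℂ) * I) • (site Sz u * (site Sx j + site Sx k))) := by
  have hcomm : Commute (site Sz u * site Sx j) (site Sz u * site Sx k) :=
    ((Commute.refl _).mul_right (commute_site_of_ne huk _ _)).mul_left
      ((commute_site_of_ne huj.symm _ _).mul_right (commute_site (.refl Sx) j k))
  rw [mul_add, smul_add, Matrix.exp_add_of_commute _ _ ((hcomm.smul_left _).smul_right _), ktFactor,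
    ktFactor]

lemma ktFactor_mul_ktFactor_eq_exp_right {v : Fin L} (hvj : v ≠ j) (hvk : v ≠ k) :
    ktFactor j v * ktFactor k v =
      NormedSpace.exp (((Real.pi : ℂ) * I) • ((site Sz j + site Sz k) * site Sx v)) := by
  have hcomm : Commute (site Sz j * site Sx v) (site Sz k * site Sx v) :=
    ((commute_site (.refl Sz) j k).mul_right (commute_site_of_ne hvj.symm _ _)).mul_left
      ((commute_site_of_ne hvk _ _).mul_right (.refl _))
  rw [add_mul, smul_add, Matrix.exp_add_of_commute _ _ ((hcomm.smul_left _).smul_right _), ktFactor,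
    ktFactor]

lemma commute_ktGate_mul_ktGate_left {M : Op L} {u : Fin L} (hjk : (k : ℕ) = j + 1) (huj : u ≠ j)
    (huk : u ≠ k) (hz : Commute M (site Sz u)) (hx : Commute M (site Sx j + site Sx k)) :
    Commute M (ktGate u j * ktGate u k) := by
  obtain hlt | hle := lt_or_ge u j
  · have hlt' : u < k := by grind
    rw [ktGate_of_lt hlt, ktGate_of_lt hlt', ktFactor_mul_ktFactor_eq_exp_left huj huk]
    exact ((hz.mul_right hx).smul_right _).exp_right
  · have hle' : k ≤ u := by grind
    rw [ktGate_of_le hle, ktGate_of_le hle', one_mul]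
    exact Commute.one_right M

lemma commute_ktGate_mul_ktGate_right {M : Op L} {v : Fin L} (hjk : (k : ℕ) = j + 1) (hvj : v ≠ j)
    (hvk : v ≠ k) (hx : Commute M (site Sx v)) (hz : Commute M (site Sz j + site Sz k)) :
    Commute M (ktGate j v * ktGate k v) := by
  obtain hlt | hle := lt_or_ge k v
  · have hlt' : j < v := by grind
    rw [ktGate_of_lt hlt, ktGate_of_lt hlt', ktFactor_mul_ktFactor_eq_exp_right hvj hvk]
    exact ((hz.mul_right hx).smul_right _).exp_right
  · have hle' : v ≤ j := by grind
    rw [ktGate_of_le hle, ktGate_of_le hle', one_mul]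
    exact Commute.one_right M

/-- The commutative monoid generated by the factors of `U_KT`, in which their product can be
reordered. -/
def ktMonoid (L : ℕ) : Submonoid (Op L) :=
  Submonoid.closure (Set.range fun p : Fin L × Fin L => ktGate p.1 p.2)

instance : IsMulCommutative (ktMonoid L) :=
  Submonoid.isMulCommutative_closure _ <| by
    rintro _ ⟨p, rfl⟩ _ ⟨q, rfl⟩
    exact commute_ktGate_ktGate p.1 p.2 q.1 q.2

/-- `ktGate u v` as an element of `ktMonoid L`. -/
def ktMonoidGate (u v : Fin L) : ktMonoid L :=
  ⟨ktGate u v, Submonoid.subset_closure ⟨(u, v), rfl⟩⟩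

open scoped IsMulCommutative

lemma UKT_eq_prod (L : ℕ) : UKT L = (∏ u, ∏ v, ktMonoidGate u v : ktMonoid L) := by
  rw [← Submonoid.subtype_apply]
  simp only [Fin.prod_univ_def, map_list_prod, List.map_map, Function.comp_def]
  rfl

/-- A gate joining an outside site to just one of `j`, `k` need not commute with `M`. The product of
the gates joining it to both does, since it involves `j` and `k` only through a total spin. -/
lemma exists_UKT_eq_mul {M : Op L} (hjk : (k : ℕ) = j + 1)
    (hoff : ∀ A l, l ≠ j → l ≠ k → Commute M (site A l))
    (hx : Commute M (site Sx j + site Sx k)) (hz : Commute M (site Sz j + site Sz k)) :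
    ∃ r : Op L, Commute M r ∧ r ^ 2 = 1 ∧ Commute (ktFactor j k) r ∧ UKT L = ktFactor j k * r := by
  have hlt : j < k := by grind
  let involutions : Submonoid (ktMonoid L) := MonoidHom.mker (powMonoidHom 2)
  let fixing : Submonoid (ktMonoid L) := (Submonoid.centralizer {M}).comap (ktMonoid L).subtype
  have mem_involutions (u v : Fin L) : ktMonoidGate u v ∈ involutions :=
    Subtype.ext (ktGate_sq u v)
  have mem_fixing {x : ktMonoid L} : x ∈ fixing ↔ Commute M x := by
    simp [fixing, Submonoid.mem_centralizer_iff, commute_iff_eq]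
  have gate_eq_one {u v : Fin L} (h : v ≤ u) : ktMonoidGate u v = 1 := Subtype.ext (ktGate_of_le h)
  obtain ⟨r, ⟨hfix, hinv⟩, hr⟩ := exists_mem_prod_prod_eq_mul (fixing ⊓ involutions) ktMonoidGate
    hlt.ne (gate_eq_one le_rfl) (gate_eq_one le_rfl) (gate_eq_one hlt.le)
    (fun u v huj huk hvj hvk => ⟨mem_fixing.mpr <|
      commute_ktGate (hoff _ u huj huk) (hoff _ v hvj hvk), mem_involutions u v⟩)
    (fun u huj huk => ⟨mem_fixing.mpr <|
      commute_ktGate_mul_ktGate_left hjk huj huk (hoff _ u huj huk) hx,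
        mul_mem (mem_involutions u j) (mem_involutions u k)⟩)
    (fun v hvj hvk => ⟨mem_fixing.mpr <|
      commute_ktGate_mul_ktGate_right hjk hvj hvk (hoff _ v hvj hvk) hz,
        mul_mem (mem_involutions j v) (mem_involutions k v)⟩)
  have hgate : (ktMonoidGate j k : Op L) = ktFactor j k := ktGate_of_lt hlt
  refine ⟨r, mem_fixing.mp hfix, congrArg Subtype.val hinv, ?_, ?_⟩
  · rw [← hgate]
    exact congrArg Subtype.val (mul_comm (ktMonoidGate j k) r)
  · rw [UKT_eq_prod, hr, Submonoid.coe_mul, hgate]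

lemma UKT_mul_mul_UKT {M : Op L} (hjk : (k : ℕ) = j + 1)
    (hoff : ∀ A l, l ≠ j → l ≠ k → Commute M (site A l))
    (hx : Commute M (site Sx j + site Sx k)) (hz : Commute M (site Sz j + site Sz k)) :
    UKT L * M * UKT L = ktFactor j k * M * ktFactor j k := by
  obtain ⟨r, hMr, hr, hFr, hU⟩ := exists_UKT_eq_mul hjk hoff hx hz
  calc UKT L * M * UKT L = ktFactor j k * (r * M) * (r * ktFactor j k) := by
        rw [hU, ← hFr.eq]; noncomm_ring
    _ = ktFactor j k * M * r ^ 2 * ktFactor j k := by rw [← hMr.eq]; noncomm_ring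
    _ = ktFactor j k * M * ktFactor j k := by rw [hr, mul_one]

end KennedyTasaki

section SelfDual

attribute [local instance] LieRing.ofAssociativeRing

variable {L : ℕ} {j k : Fin L}

lemma commute_heis_site {l : Fin L} (hlj : l ≠ j) (hlk : l ≠ k) (A : Matrix (Fin 3) (Fin 3) ℂ) :
    Commute (heis j k) (site A l) := by
  have hterm (B : Matrix (Fin 3) (Fin 3) ℂ) : Commute (site B j * site B k) (site A l) :=
    (commute_site_of_ne hlj.symm B A).mul_left (commute_site_of_ne hlk.symm B A)
  exact ((hterm Sx).add_left (hterm Sy)).add_left (hterm Sz)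

lemma commute_heis_Sx_add_Sx (hjk : j ≠ k) : Commute (heis j k) (site Sx j + site Sx k) := by
  have hxz : ⁅Sx, Sz⁆ = -(I • Sy) := by rw [← lie_skew, lie_Sz_Sx]
  refine (commute_iff_lie_eq.mpr ?_).symm
  simp only [heis, lie_add, lie_site_add_site hjk, lie_self, lie_Sx_Sy, hxz]
  simp only [← siteHom_apply, map_zero, map_neg, map_smul, zero_mul, mul_zero, neg_mul, mul_neg,
    smul_mul_assoc, mul_smul_comm]
  abel

lemma commute_heis_Sz_add_Sz (hjk : j ≠ k) : Commute (heis j k) (site Sz j + site Sz k) := by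
  refine (commute_iff_lie_eq.mpr ?_).symm
  simp only [heis, lie_add, lie_site_add_site hjk, lie_self, lie_Sz_Sx, lie_Sz_Sy]
  simp only [← siteHom_apply, map_zero, map_neg, map_smul, zero_mul, mul_zero, neg_mul, mul_neg,
    smul_mul_assoc, mul_smul_comm]
  abel

lemma commute_bond {X : Op L} (h : Commute (heis j k) X) (θ : ℝ) : Commute (bond θ j k) X :=
  (h.smul_left _).add_left ((h.pow_left 2).smul_left _)

lemma UKT_mul_bond_mul_UKT (hjk : (k : ℕ) = j + 1) (θ : ℝ) :
    UKT L * bond θ j k * UKT L = ktFactor j k * bond θ j k * ktFactor j k := by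
  have hne : j ≠ k := by grind
  exact UKT_mul_mul_UKT hjk (fun A _ hlj hlk => commute_bond (commute_heis_site hlj hlk A) θ)
    (commute_bond (commute_heis_Sx_add_Sx hne) θ) (commute_bond (commute_heis_Sz_add_Sz hne) θ)

lemma HSD_eq_sum_bond (L : ℕ) (θ : ℝ) : HSD L θ = ∑ j : Fin L, if h : (j : ℕ) + 1 < L then
    bond θ j ⟨j + 1, h⟩ + UKT L * bond θ j ⟨j + 1, h⟩ * UKT L else 0 := by
  rw [HSD, HBLBQ, Finset.mul_sum, Finset.sum_mul, ← Finset.sum_add_distrib]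
  refine Finset.sum_congr rfl fun j _ => ?_
  split_ifs
  · rfl
  · simp only [mul_zero, zero_mul, add_zero]

lemma commute_HSD_site_hMat (θ : ℝ) (l : Fin L) : Commute (HSD L θ) (site hMat l) := by
  rw [HSD_eq_sum_bond]
  refine Commute.sum_left _ _ _ fun j _ => ?_
  split_ifs with hj
  · rw [UKT_mul_bond_mul_UKT rfl]
    exact (commute_site_hMat_bond_add_conj (by grind) θ l).symm
  · exact Commute.zero_left _

lemma commute_HSD_Pproj (L : ℕ) (θ : ℝ) : Commute (HSD L θ) (Pproj L) := by
  have hP : Pproj L = tensorProd fun _ => nMat := rfl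
  rw [hP]
  refine commute_tensorProd fun j => ?_
  rw [nMat_eq_one_sub_hMat, ← siteHom_apply, map_sub, map_one]
  exact (Commute.one_right _).sub_right (commute_HSD_site_hMat θ j)

end SelfDual

/-- The self-dual Hamiltonian `H_SD(θ)` commutes with the projection `P` onto
the hole-free subspace and with the total hole number `N_h = Σ_j h_j`; in particular the
hole-free subspace (the range of `P`, i.e. the fixed vectors of `P`) is invariant under
`H_SD(θ)`. -/
theorem HSD_hole_symmetry (L : ℕ) (hL : 2 ≤ L) (θ : ℝ) :
    Commute (HSD L θ) (Pproj L) ∧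
      Commute (HSD L θ) (∑ j : Fin L, site hMat j) ∧
      (∀ v : (Fin L → Fin 3) → ℂ, (Pproj L).mulVec v = v →
        (Pproj L).mulVec ((HSD L θ).mulVec v) = (HSD L θ).mulVec v) := by
  have hP := commute_HSD_Pproj L θ
  refine ⟨hP, Commute.sum_right _ _ _ fun j _ => commute_HSD_site_hMat θ j, fun v hv => ?_⟩
  rw [Matrix.mulVec_mulVec, ← hP.eq, ← Matrix.mulVec_mulVec, hv]

end
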